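/- There exists a constant C such that for every f ∈ S³, all d ∈ ℕ and every x ∈ 𝒜_d: |G_d f(x) − G̃_d f(x)| ≤ C·‖f'‖_{∞,1/2}·e^{|x₁|}·d^{−1/2}. -/

import Mathlib

/-!
Write `r = log ρ`, `σ = l / √d` and `Z_i = Y_i - x_i`, a centred Gaussian of standard deviation `σ`.
Both generators have the form `d · E[(f(Y₁) - f(x₁)) · w(Y₁)]`, where `w` is an acceptance
probability averaged over the coordinates `2, …, d`: for `G̃_d` it is `β(x, ·)` by definition, and
for `G_d` it is obtained from Fubini's theorem (`Gd_eq`).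

Since `t ↦ min 1 (e^t)` is 1-Lipschitz, the two averages differ (`acc_sub_beta`) by at most the
first-order Taylor error of `r` in the first coordinate, which is `O(Z₁²)` up to exponential
weights, plus the expectation of `|∑_{i ≥ 2} (r(Y_i) - r(x_i) - K(x_i, Y_i))|`. Each term of that
sum is a cubic `c_i Z_i³` with `c_i² ≤ C e^{|x_i|}`, plus a remainder of order four. The cubics are
centred and independent, so their sum has second moment `O(d σ⁶) = O(d⁻²)`, while the remainders
contribute `O(d σ⁴) = O(d⁻¹)`; here condition (1) of `𝒜_d` gives `∑ e^{|x_i|} = O(d)`. Hence the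
expectation is `O(1/d)` (`rest_bound`).

Finally `|f(Y₁) - f(x₁)|` is `O(|Z₁|)` with weight `e^{(|x₁| + |Z₁|)/2}` (`increment_bound`), so the
difference of the generators is `O(d (σ³ + σ/d)) = O(d^{-1/2})`, with weight `e^{|x₁|}`. All
exponential weights in `Z_i` are absorbed by the Gaussian moments `wmom`, uniformly in `d`
because `σ ≤ l`.
-/


open MeasureTheory ProbabilityTheory Filter Set

noncomputable section

/-- The exponentially-weighted sup-norm `‖g‖_{∞,s} = sup_x e^{-s|x|} |g x|`. -/
def normIS (g : ℝ → ℝ) (s : ℝ) : ℝ := ⨆ x : ℝ, Real.exp (-(s * |x|)) * |g x|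

/-- Membership in the space `Sⁿ`: `n`-times continuously differentiable with all
iterated derivatives up to order `n` of sub-exponential growth. -/
def MemS (n : ℕ) (g : ℝ → ℝ) : Prop :=
  ContDiff ℝ n g ∧ ∀ s > (0:ℝ), ∀ i ≤ n,
    BddAbove (Set.range fun x => Real.exp (-(s * |x|)) * |iteratedDeriv i g x|)

/-- A positive sequence is sluggish if it tends to infinity but `a d / √(log d)` stays bounded. -/
def Sluggish (a : ℕ → ℝ) : Prop :=
  (∀ d, 0 < a d) ∧ Tendsto a atTop atTop ∧
    ∃ M : ℝ, ∀ d : ℕ, 2 ≤ d → a d / Real.sqrt (Real.log d) ≤ M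

/-- `(log ρ)'` -/
def dl (ρ : ℝ → ℝ) : ℝ → ℝ := deriv fun x => Real.log (ρ x)

/-- `(log ρ)''` -/
def d2l (ρ : ℝ → ℝ) : ℝ → ℝ := deriv (dl ρ)

/-- `ρ(g) = ∫ g dρ` -/
def rhoE (ρ g : ℝ → ℝ) : ℝ := ∫ x, g x * ρ x

/-- `J = ρ(((log ρ)')²)` -/
def Jc (ρ : ℝ → ℝ) : ℝ := rhoE ρ fun x => (dl ρ x) ^ 2

/-- super-exponential tails: `(x/|x|)·(log ρ)'(x) → -∞` as `|x| → ∞`. -/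
def SuperExpTails (ρ : ℝ → ℝ) : Prop :=
  Tendsto (dl ρ) atTop atBot ∧ Tendsto (dl ρ) atBot atTop

/-- standard normal CDF -/
def stdCDF (t : ℝ) : ℝ := ((gaussianReal 0 1) (Set.Iic t)).toReal

/-- the constant `h(l) = 2l²Φ(-l√J/2)` -/
def hc (ρ : ℝ → ℝ) (l : ℝ) : ℝ := 2 * l ^ 2 * stdCDF (-(l * Real.sqrt (Jc ρ)) / 2)

/-- the limiting (Langevin) generator `G f = (h(l)/2)(f'' + (log ρ)' f')` -/
def Gop (ρ : ℝ → ℝ) (l : ℝ) (f : ℝ → ℝ) (x : ℝ) : ℝ :=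
  hc ρ l / 2 * (deriv (deriv f) x + dl ρ x * deriv f x)

/-- the product measure `ρ_d` on `ℝ^d` -/
def pm (ρ : ℝ → ℝ) (d : ℕ) : Measure (Fin d → ℝ) :=
  Measure.pi fun _ => volume.withDensity fun x => ENNReal.ofReal (ρ x)

/-- law of the proposal `Y ~ N(x, l²/d · I_d)` -/
def gaussPi (l : ℝ) (d : ℕ) (x : Fin d → ℝ) : Measure (Fin d → ℝ) :=
  Measure.pi fun i => gaussianReal (x i) ((l ^ 2 / (d:ℝ)).toNNReal)

/-- the RWM generator `G_d` -/
def Gd (ρ : ℝ → ℝ) (l : ℝ) (d : ℕ) [NeZero d] (f : ℝ → ℝ) (x : Fin d → ℝ) : ℝ :=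
  (d:ℝ) * ∫ y, (f (y 0) - f (x 0)) * min 1 ((∏ i, ρ (y i)) / ∏ i, ρ (x i)) ∂(gaussPi l d x)

/-- the set `A` associated with the constant `c_A` -/
def Aset (ρ : ℝ → ℝ) (c : ℝ) : Set ℝ :=
  {x | |d2l ρ x| < (dl ρ x) ^ 2 ∧ 1 / c < |dl ρ x| ∧ |dl ρ x| < c}

/-- indices `2,…,d` (all coordinates except the first) -/
def restIdx (d : ℕ) : Finset (Fin d) := Finset.univ.filter fun i => (i : ℕ) ≠ 0

/-- the typical sets `𝒜_d` -/
def Ad (ρ : ℝ → ℝ) (c : ℝ) (a : ℕ → ℝ) (d : ℕ) : Set (Fin d → ℝ) :=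
  {x | (1 / ((d : ℝ) - 1)) * ∑ i ∈ restIdx d, Real.exp |x i| < 2 * rhoE ρ (fun t => Real.exp |t|)
    ∧ (∫ t in Aset ρ c, ρ t) / 2 <
        (1 / ((d : ℝ) - 1)) * ∑ i ∈ restIdx d, (Aset ρ c).indicator (fun _ => (1:ℝ)) (x i)
    ∧ (1 / ((d : ℝ) - 1)) * |∑ i ∈ restIdx d, ((dl ρ (x i)) ^ 2 - Jc ρ)| <
        a d / Real.sqrt d * Real.sqrt (3 * rhoE ρ fun t => ((dl ρ t) ^ 2 - Jc ρ) ^ 2)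
    ∧ (1 / ((d : ℝ) - 1)) * |∑ i ∈ restIdx d, (d2l ρ (x i) + Jc ρ)| <
        a d / Real.sqrt d * Real.sqrt (3 * rhoE ρ fun t => (d2l ρ t + Jc ρ) ^ 2)}

/-- `K(x,y)` -/
def Kf (ρ : ℝ → ℝ) (c : ℝ) (x y : ℝ) : ℝ :=
  dl ρ x * (y - x) + d2l ρ x / 2 * (y - x) ^ 2
    + (dl ρ x) ^ 3 * (Aset ρ c).indicator (fun _ => (1:ℝ)) x / 3 * (y - x) ^ 3

/-- `Σ_{i=2}^d K(x_i, Y_i)` -/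
def SK (ρ : ℝ → ℝ) (c : ℝ) (d : ℕ) (x Y : Fin d → ℝ) : ℝ :=
  ∑ i ∈ restIdx d, Kf ρ c (x i) (Y i)

/-- `β(x,y)` -/
def betaF (ρ : ℝ → ℝ) (c l : ℝ) (d : ℕ) [NeZero d] (x : Fin d → ℝ) (y : ℝ) : ℝ :=
  ∫ Y, min 1 (Real.exp (dl ρ (x 0) * (y - x 0) + SK ρ c d x Y)) ∂(gaussPi l d x)

/-- `G̃_d` -/
def tGd (ρ : ℝ → ℝ) (c l : ℝ) (d : ℕ) [NeZero d] (f : ℝ → ℝ) (x : Fin d → ℝ) : ℝ :=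
  (d:ℝ) * ∫ y, (f y - f (x 0)) * betaF ρ c l d x y
    ∂(gaussianReal (x 0) ((l ^ 2 / (d:ℝ)).toNNReal))

/-- `Ĝ_d` -/
def hGd (ρ : ℝ → ℝ) (c l : ℝ) (d : ℕ) [NeZero d] (f : ℝ → ℝ) (x : Fin d → ℝ) : ℝ :=
  l ^ 2 / 2 * deriv (deriv f) (x 0) * (∫ Y, min 1 (Real.exp (SK ρ c d x Y)) ∂(gaussPi l d x))
    + l ^ 2 * deriv f (x 0) * dl ρ (x 0) *
      (∫ Y, (Set.Iio (0:ℝ)).indicator Real.exp (SK ρ c d x Y) ∂(gaussPi l d x))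

/-- `𝒩(x,Y)` -/
def Nf (ρ : ℝ → ℝ) (l : ℝ) (d : ℕ) (x Y : Fin d → ℝ) : ℝ :=
  l ^ 2 / (2 * (d:ℝ)) * ∑ i ∈ restIdx d, d2l ρ (x i)
    + ∑ i ∈ restIdx d, dl ρ (x i) * (Y i - x i)

/-- `Ğ_d` -/
def bGd (ρ : ℝ → ℝ) (l : ℝ) (d : ℕ) [NeZero d] (f : ℝ → ℝ) (x : Fin d → ℝ) : ℝ :=
  l ^ 2 / 2 * deriv (deriv f) (x 0) * (∫ Y, min 1 (Real.exp (Nf ρ l d x Y)) ∂(gaussPi l d x))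
    + l ^ 2 * deriv f (x 0) * dl ρ (x 0) *
      (∫ Y, (Set.Iio (0:ℝ)).indicator Real.exp (Nf ρ l d x Y) ∂(gaussPi l d x))

/-! ### Taylor estimates with exponential weights -/

/-- The mean value inequality iterated once: a bound of order `k` at `x` on the derivative gives a
bound of order `k + 1` on the function. Losing the factor `1 / (k + 1)` is harmless here. -/
lemma abs_le_of_deriv_bound {g g' : ℝ → ℝ} {x y B : ℝ} {k : ℕ} (hB : 0 ≤ B)
    (hg : ∀ t, HasDerivAt g (g' t) t) (h0 : g x = 0)
    (hb : ∀ t ∈ uIcc x y, |g' t| ≤ B * |t - x| ^ k) :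
    ∀ t ∈ uIcc x y, |g t| ≤ B * |t - x| ^ (k + 1) := by
  intro t ht
  have hsub : uIcc x t ⊆ uIcc x y := uIcc_subset_uIcc left_mem_uIcc ht
  have h := Convex.norm_image_sub_le_of_norm_hasDerivWithin_le (s := uIcc x t) (f := g) (f' := g')
    (x := x) (y := t) (C := B * |t - x| ^ k)
    (fun u _ => (hg u).hasDerivWithinAt)
    (fun u hu => (hb u (hsub hu)).trans
      (mul_le_mul_of_nonneg_left
        (pow_le_pow_left₀ (abs_nonneg _) (abs_sub_left_of_mem_uIcc hu) k) hB))
    (convex_uIcc x t) left_mem_uIcc right_mem_uIcc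
  rw [h0, sub_zero, Real.norm_eq_abs, Real.norm_eq_abs] at h
  calc |g t| ≤ _ := h
    _ = _ := by ring

lemma exp_half_mono {x y t : ℝ} (ht : t ∈ uIcc x y) :
    Real.exp (|t| / 2) ≤ Real.exp ((|x| + |y - x|) / 2) := by
  have h1 : |t - x| ≤ |y - x| := abs_sub_left_of_mem_uIcc ht
  have h2 : |t| ≤ |x| + |t - x| := by
    have := abs_add_le x (t - x)
    simpa using this
  apply Real.exp_le_exp.2
  linarith

/-- A function in `Sⁿ` has its derivatives bounded by a multiple of `e^{|x|/2}`. -/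
lemma MemS.bound {n : ℕ} {g : ℝ → ℝ} (hg : MemS n g) {i : ℕ} (hi : i ≤ n) :
    ∃ M : ℝ, 0 ≤ M ∧ ∀ x, |iteratedDeriv i g x| ≤ M * Real.exp (|x| / 2) := by
  obtain ⟨M, hM⟩ := hg.2 (1 / 2) (by norm_num) i hi
  refine ⟨M, ?_, fun x => ?_⟩
  · have h := hM (mem_range_self 0)
    exact le_trans (by positivity) h
  · have h := hM (mem_range_self x)
    beta_reduce at h
    rw [Real.exp_neg, inv_mul_le_iff₀ (Real.exp_pos _)] at h
    rwa [mul_comm, show |x| / 2 = 1 / 2 * |x| by ring]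

lemma MemS.hasDerivAt {n : ℕ} {g : ℝ → ℝ} (hg : MemS n g) {i : ℕ} (hi : i < n) (x : ℝ) :
    HasDerivAt (iteratedDeriv i g) (iteratedDeriv (i + 1) g x) x := by
  rw [iteratedDeriv_succ]
  exact (hg.1.differentiable_iteratedDeriv i (by exact_mod_cast hi)).differentiableAt.hasDerivAt

/-- First-order and third-order Taylor estimates for `r`, together with the growth bound on the
third derivative; a single constant serves all three. -/
lemma taylor_bounds {r : ℝ → ℝ} (hr : MemS 4 r) :
    ∃ M : ℝ, 0 ≤ M ∧
      (∀ x y, |r y - r x - deriv r x * (y - x)|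
        ≤ M * Real.exp ((|x| + |y - x|) / 2) * |y - x| ^ 2) ∧
      (∀ x, |iteratedDeriv 3 r x| ≤ M * Real.exp (|x| / 2)) ∧
      (∀ x y, |r y - r x - deriv r x * (y - x) - deriv (deriv r) x / 2 * (y - x) ^ 2
          - iteratedDeriv 3 r x / 6 * (y - x) ^ 3|
        ≤ M * Real.exp ((|x| + |y - x|) / 2) * |y - x| ^ 4) := by
  obtain ⟨M2, hM2, h2⟩ := hr.bound (i := 2) (by norm_num)
  obtain ⟨M3, hM3, h3⟩ := hr.bound (i := 3) (by norm_num)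
  obtain ⟨M4, hM4, h4⟩ := hr.bound (i := 4) (by norm_num)
  have e1 : iteratedDeriv 1 r = deriv r := iteratedDeriv_one
  have e2 : iteratedDeriv 2 r = deriv (deriv r) := by rw [iteratedDeriv_succ, e1]
  have d0 : ∀ t, HasDerivAt r (deriv r t) t := fun t => by
    simpa [e1] using hr.hasDerivAt (i := 0) (by norm_num) t
  have d1 : ∀ t, HasDerivAt (deriv r) (deriv (deriv r) t) t := fun t => by
    simpa [e1, e2] using hr.hasDerivAt (i := 1) (by norm_num) t
  have d2 : ∀ t, HasDerivAt (deriv (deriv r)) (iteratedDeriv 3 r t) t := fun t => by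
    simpa [e2] using hr.hasDerivAt (i := 2) (by norm_num) t
  have d3 : ∀ t, HasDerivAt (iteratedDeriv 3 r) (iteratedDeriv 4 r t) t := fun t =>
    hr.hasDerivAt (i := 3) (by norm_num) t
  rw [e2] at h2
  refine ⟨M2 + M3 + M4, by positivity, fun x y => ?_, fun x => ?_, fun x y => ?_⟩
  · set B := M2 * Real.exp ((|x| + |y - x|) / 2) with hB
    have hB0 : 0 ≤ B := by positivity
    have b2 : ∀ t ∈ uIcc x y, |deriv (deriv r) t| ≤ B * |t - x| ^ 0 := fun t ht => by
      rw [pow_zero, mul_one]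
      exact (h2 t).trans (mul_le_mul_of_nonneg_left (exp_half_mono ht) hM2)
    have b1 := abs_le_of_deriv_bound (g := fun t => deriv r t - deriv r x) hB0
      (fun t => (d1 t).sub_const _) (sub_self _) b2
    have b0 := abs_le_of_deriv_bound (g := fun t => r t - r x - deriv r x * (t - x)) hB0
      (fun t => by
        have := ((d0 t).sub_const (r x)).sub (((hasDerivAt_id t).sub_const x).const_mul (deriv r x))
        convert! this using 1
        ring) (by ring) b1 y right_mem_uIcc
    refine b0.trans ?_
    rw [hB]
    gcongr
    linarith
  · refine (h3 x).trans ?_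
    gcongr
    linarith
  · set B := M4 * Real.exp ((|x| + |y - x|) / 2) with hB
    have hB0 : 0 ≤ B := by positivity
    have b4 : ∀ t ∈ uIcc x y, |iteratedDeriv 4 r t| ≤ B * |t - x| ^ 0 := fun t ht => by
      rw [pow_zero, mul_one]
      exact (h4 t).trans (mul_le_mul_of_nonneg_left (exp_half_mono ht) hM4)
    have p1 : ∀ t, HasDerivAt (fun t => t - x) 1 t := fun t => (hasDerivAt_id t).sub_const x
    have b3 := abs_le_of_deriv_bound (g := fun t => iteratedDeriv 3 r t - iteratedDeriv 3 r x) hB0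
      (fun t => (d3 t).sub_const _) (sub_self _) b4
    have b2 := abs_le_of_deriv_bound (g := fun t => deriv (deriv r) t - deriv (deriv r) x
        - iteratedDeriv 3 r x * (t - x)) hB0
      (fun t => by
        have := ((d2 t).sub_const (deriv (deriv r) x)).sub ((p1 t).const_mul (iteratedDeriv 3 r x))
        convert! this using 1
        ring) (by ring) b3
    have b1 := abs_le_of_deriv_bound (g := fun t => deriv r t - deriv r x
        - deriv (deriv r) x * (t - x) - iteratedDeriv 3 r x / 2 * (t - x) ^ 2) hB0
      (fun t => by
        have := (((d1 t).sub_const (deriv r x)).sub ((p1 t).const_mul (deriv (deriv r) x))).sub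
          (((p1 t).pow 2).const_mul (iteratedDeriv 3 r x / 2))
        convert! this using 1
        push_cast
        ring) (by ring) b2
    have b0 := abs_le_of_deriv_bound (g := fun t => r t - r x - deriv r x * (t - x)
        - deriv (deriv r) x / 2 * (t - x) ^ 2 - iteratedDeriv 3 r x / 6 * (t - x) ^ 3) hB0
      (fun t => by
        have := ((((d0 t).sub_const (r x)).sub ((p1 t).const_mul (deriv r x))).sub
          (((p1 t).pow 2).const_mul (deriv (deriv r) x / 2))).sub
          (((p1 t).pow 3).const_mul (iteratedDeriv 3 r x / 6))
        convert! this using 1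
        push_cast
        ring) (by ring) b1 y right_mem_uIcc
    refine b0.trans ?_
    rw [hB]
    gcongr
    linarith

lemma normIS_nonneg (g : ℝ → ℝ) (s : ℝ) : 0 ≤ normIS g s :=
  Real.iSup_nonneg fun _ => by positivity

/-- Increments of `f` are controlled by the weighted norm of `f'`. -/
lemma increment_bound {f : ℝ → ℝ} (hf : MemS 3 f) (x y : ℝ) :
    |f y - f x| ≤ normIS (deriv f) (1 / 2) * Real.exp ((|x| + |y - x|) / 2) * |y - x| := by
  have hbd := hf.2 (1 / 2) (by norm_num) 1 (by norm_num)
  rw [iteratedDeriv_one] at hbd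
  have hN := normIS_nonneg (deriv f) (1 / 2)
  have hd : ∀ t, |deriv f t| ≤ normIS (deriv f) (1 / 2) * Real.exp (|t| / 2) := fun t => by
    have h : Real.exp (-(1 / 2 * |t|)) * |deriv f t| ≤ normIS (deriv f) (1 / 2) := le_ciSup hbd t
    rw [Real.exp_neg, inv_mul_le_iff₀ (Real.exp_pos _)] at h
    rwa [mul_comm, show |t| / 2 = 1 / 2 * |t| by ring]
  have d0 : ∀ t, HasDerivAt f (deriv f t) t := fun t => by
    simpa [iteratedDeriv_one] using hf.hasDerivAt (i := 0) (by norm_num) t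
  have := abs_le_of_deriv_bound (g := fun t => f t - f x) (k := 0)
    (B := normIS (deriv f) (1 / 2) * Real.exp ((|x| + |y - x|) / 2)) (by positivity)
    (fun t => (d0 t).sub_const _) (sub_self _) (fun t ht => by
      rw [pow_zero, mul_one]
      exact (hd t).trans (mul_le_mul_of_nonneg_left (exp_half_mono ht) hN)) y right_mem_uIcc
  simpa using this

lemma abs_min_exp_sub_le (a b : ℝ) : |min 1 (Real.exp a) - min 1 (Real.exp b)| ≤ |a - b| := by
  wlog h : b ≤ a generalizing a b
  · rw [abs_sub_comm, abs_sub_comm a]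
    exact this b a (le_of_not_ge h)
  have h1 : Real.exp b ≤ Real.exp a := Real.exp_le_exp.2 h
  rw [abs_of_nonneg (sub_nonneg.2 (min_le_min_left 1 h1)), abs_of_nonneg (sub_nonneg.2 h)]
  rcases le_or_gt 0 b with hb | hb
  · rw [min_eq_left (Real.one_le_exp hb)]
    linarith [min_le_left 1 (Real.exp a)]
  · rw [min_eq_right (Real.exp_le_one_iff.2 hb.le)]
    -- to be used with `m = min 0 a`, so that `e^m = min 1 e^a`
    have key : ∀ m, m ≤ 0 → b ≤ m → Real.exp m - Real.exp b ≤ m - b := fun m hm hbm => by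
      have e : Real.exp b = Real.exp m * Real.exp (b - m) := by rw [← Real.exp_add]; congr 1; ring
      have h2 := Real.add_one_le_exp (b - m)
      have h3 := Real.exp_le_one_iff.2 hm
      have h4 := Real.exp_pos m
      have h5 : Real.exp (b - m) ≤ 1 := Real.exp_le_one_iff.2 (by linarith)
      rw [e]
      nlinarith
    rcases le_or_gt a 0 with ha | ha
    · rw [min_eq_right (Real.exp_le_one_iff.2 ha)]
      exact key a ha h
    · rw [min_eq_left (Real.one_le_exp ha.le)]
      have := key 0 le_rfl hb.le
      rw [Real.exp_zero] at this
      linarith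

/-! ### Gaussian moments -/

/-- The exponentially weighted absolute moment `E[e^{l|N|}|N|^k]` of a standard normal `N`. -/
def wmom (l : ℝ) (k : ℕ) : ℝ := ∫ t, Real.exp (l * |t|) * |t| ^ k ∂(gaussianReal 0 1)

lemma wmom_nonneg (l : ℝ) (k : ℕ) : 0 ≤ wmom l k := integral_nonneg fun _ => by positivity

lemma integrable_wmom (l : ℝ) (k : ℕ) :
    Integrable (fun t : ℝ => Real.exp (l * |t|) * |t| ^ k) (gaussianReal 0 1) := by
  have h : ∀ v : ℝ, Integrable (fun t : ℝ => |t| ^ k * Real.exp (v * t)) (gaussianReal 0 1) :=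
    fun v => integrable_pow_abs_mul_exp_of_mem_interior_integrableExpSet (X := fun t => t)
      (by rw [integrableExpSet_fun_id_gaussianReal]; simp) k
  refine ((h l).add (h (-l))).mono' (by fun_prop) (ae_of_all _ fun t => ?_)
  rw [Real.norm_of_nonneg (by positivity)]
  simp only [Pi.add_apply]
  rw [← mul_add, mul_comm]
  gcongr
  rcases abs_cases t with ⟨h, _⟩ | ⟨h, _⟩ <;> rw [h]
  · linarith [Real.exp_pos (-l * t)]
  · rw [mul_neg, neg_mul]
    linarith [Real.exp_pos (l * t)]

lemma gaussian_eq_map (x σ : ℝ) :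
    gaussianReal x ((σ ^ 2).toNNReal) = (gaussianReal 0 1).map (fun t => σ * t + x) := by
  have h1 := gaussianReal_map_const_mul (μ := 0) (v := 1) σ
  have h2 := gaussianReal_map_add_const (μ := σ * 0) (v := .mk (σ ^ 2) (sq_nonneg _) * 1) x
  rw [← h1, Measure.map_map (by fun_prop) (by fun_prop), mul_one, mul_zero, zero_add,
    show (σ ^ 2).toNNReal = NNReal.mk (σ ^ 2) (sq_nonneg _) from
      Real.toNNReal_of_nonneg (sq_nonneg _)] at *
  exact h2.symm

section

variable {l σ : ℝ}

lemma integrable_gauss (hσ : 0 ≤ σ) (hσl : σ ≤ l) (x : ℝ) (k : ℕ) :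
    Integrable (fun y => Real.exp |y - x| * |y - x| ^ k) (gaussianReal x ((σ ^ 2).toNNReal)) := by
  rw [gaussian_eq_map, integrable_map_measure (by fun_prop) (by fun_prop)]
  refine ((integrable_wmom l k).const_mul (σ ^ k)).mono' (by fun_prop) (ae_of_all _ fun t => ?_)
  rw [Real.norm_of_nonneg (by simp only [Function.comp]; positivity)]
  simp only [Function.comp, add_sub_cancel_right, abs_mul, abs_of_nonneg hσ, mul_pow]
  have : Real.exp (σ * |t|) ≤ Real.exp (l * |t|) := by gcongr
  calc _ ≤ Real.exp (l * |t|) * (σ ^ k * |t| ^ k) := by gcongr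
    _ = _ := by ring

/-- A centred Gaussian increment of standard deviation `σ ≤ l` has weighted moments of
order `σ^k`. -/
lemma moment_gauss (hσ : 0 ≤ σ) (hσl : σ ≤ l) (x : ℝ) (k : ℕ) :
    ∫ y, Real.exp |y - x| * |y - x| ^ k ∂(gaussianReal x ((σ ^ 2).toNNReal))
      ≤ σ ^ k * wmom l k := by
  have hi := integrable_gauss hσ hσl x k
  rw [gaussian_eq_map] at hi ⊢
  rw [integrable_map_measure (by fun_prop) (by fun_prop)] at hi
  rw [integral_map (by fun_prop) (by fun_prop), wmom, ← integral_const_mul]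
  refine integral_mono hi ((integrable_wmom l k).const_mul (σ ^ k)) fun t => ?_
  simp only [add_sub_cancel_right, abs_mul, abs_of_nonneg hσ, mul_pow]
  have : Real.exp (σ * |t|) ≤ Real.exp (l * |t|) := by gcongr
  calc _ ≤ Real.exp (l * |t|) * (σ ^ k * |t| ^ k) := by gcongr
    _ = _ := by ring

lemma third_moment_zero (x : ℝ) :
    ∫ y, (y - x) ^ 3 ∂(gaussianReal x ((σ ^ 2).toNNReal)) = 0 := by
  rw [gaussian_eq_map, integral_map (by fun_prop) (by fun_prop)]
  simp only [add_sub_cancel_right]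
  have h : ∫ t, (σ * t) ^ 3 ∂(gaussianReal 0 1) = ∫ t, (σ * -t) ^ 3 ∂(gaussianReal 0 1) := by
    conv_lhs => rw [show gaussianReal 0 1 = (gaussianReal 0 1).map (fun t => -t) by
      rw [gaussianReal_map_neg, neg_zero]]
    rw [integral_map (by fun_prop) (by fun_prop)]
  have h' : ∫ t, (σ * -t) ^ 3 ∂(gaussianReal 0 1) = -∫ t, (σ * t) ^ 3 ∂(gaussianReal 0 1) := by
    rw [← integral_neg]
    congr 1 with t
    ring
  linarith

lemma memLp_cube (hσ : 0 ≤ σ) (x b : ℝ) :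
    MemLp (fun y => b * (y - x) ^ 3) 2 (gaussianReal x ((σ ^ 2).toNNReal)) := by
  rw [memLp_two_iff_integrable_sq (by fun_prop)]
  refine ((integrable_gauss hσ le_rfl x 6).const_mul (b ^ 2)).mono' (by fun_prop)
    (ae_of_all _ fun y => ?_)
  rw [Real.norm_of_nonneg (by positivity)]
  have h1 : 1 ≤ Real.exp |y - x| := Real.one_le_exp (abs_nonneg _)
  calc (b * (y - x) ^ 3) ^ 2 = b ^ 2 * (1 * |y - x| ^ 6) := by
        rw [show |y - x| ^ 6 = (|y - x| ^ 2) ^ 3 by ring, sq_abs]; ring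
    _ ≤ _ := by gcongr

lemma variance_cube_le (hσ : 0 ≤ σ) (hσl : σ ≤ l) (x b : ℝ) :
    Var[fun y => b * (y - x) ^ 3; gaussianReal x ((σ ^ 2).toNNReal)]
      ≤ b ^ 2 * (σ ^ 6 * wmom l 6) := by
  refine (variance_le_expectation_sq (by fun_prop)).trans ?_
  refine le_trans ?_ (mul_le_mul_of_nonneg_left (moment_gauss hσ hσl x 6) (sq_nonneg b))
  rw [← integral_const_mul]
  refine integral_mono ?_ ((integrable_gauss hσ le_rfl x 6).const_mul (b ^ 2)) fun y => ?_
  · exact (memLp_two_iff_integrable_sq (by fun_prop)).1 (memLp_cube hσ x b)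
  · have h1 : 1 ≤ Real.exp |y - x| := Real.one_le_exp (abs_nonneg _)
    calc (b * (y - x) ^ 3) ^ 2 = b ^ 2 * (1 * |y - x| ^ 6) := by
          rw [show |y - x| ^ 6 = (|y - x| ^ 2) ^ 3 by ring, sq_abs]; ring
      _ ≤ _ := by gcongr

/-- The coordinates being independent, the cubic terms are uncorrelated and centred, so the second
moment of their sum is the sum of the second moments. -/
lemma second_moment_sum {d : ℕ} (hσ : 0 ≤ σ) (hσl : σ ≤ l) (x b : Fin d → ℝ) :
    Integrable (fun Y : Fin d → ℝ => (∑ i, b i * (Y i - x i) ^ 3) ^ 2)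
        (Measure.pi fun i => gaussianReal (x i) ((σ ^ 2).toNNReal)) ∧
    ∫ Y, (∑ i, b i * (Y i - x i) ^ 3) ^ 2
        ∂(Measure.pi fun i => gaussianReal (x i) ((σ ^ 2).toNNReal))
      ≤ (∑ i, b i ^ 2) * (σ ^ 6 * wmom l 6) := by
  set μ : Measure (Fin d → ℝ) :=
    Measure.pi fun i => gaussianReal (x i) ((σ ^ 2).toNNReal) with hμ
  have hL : ∀ i, MemLp (fun Y : Fin d → ℝ => b i * (Y i - x i) ^ 3) 2 μ := fun i =>
    (memLp_cube hσ (x i) (b i)).comp_measurePreserving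
      (measurePreserving_eval (fun i => gaussianReal (x i) ((σ ^ 2).toNNReal)) i)
  have hS : MemLp (fun Y : Fin d → ℝ => ∑ i, b i * (Y i - x i) ^ 3) 2 μ :=
    memLp_finsetSum _ fun i _ => hL i
  refine ⟨(memLp_two_iff_integrable_sq hS.aestronglyMeasurable).1 hS, ?_⟩
  have hmean : ∫ Y, (∑ i, b i * (Y i - x i) ^ 3) ∂μ = 0 := by
    rw [integral_finsetSum _ fun i _ => (hL i).integrable (by norm_num)]
    refine Finset.sum_eq_zero fun i _ => ?_
    rw [hμ, integral_comp_eval (μ := fun i => gaussianReal (x i) ((σ ^ 2).toNNReal))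
        (f := fun y : ℝ => b i * (y - x i) ^ 3) (by fun_prop),
      integral_const_mul, third_moment_zero, mul_zero]
  rw [← variance_of_integral_eq_zero hS.aemeasurable hmean]
  have hv := variance_sum_pi (μ := fun i => gaussianReal (x i) ((σ ^ 2).toNNReal))
    (X := fun i y => b i * (y - x i) ^ 3) fun i => memLp_cube hσ (x i) (b i)
  rw [show (fun Y : Fin d → ℝ => ∑ i, b i * (Y i - x i) ^ 3)
    = ∑ i, fun Y : Fin d → ℝ => b i * (Y i - x i) ^ 3 by ext; simp, hv, Finset.sum_mul]
  exact Finset.sum_le_sum fun i _ => variance_cube_le hσ hσl (x i) (b i)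

end

/-! ### Resampling one coordinate of a product measure -/

lemma map_update_pi {d : ℕ} (ν : Fin d → Measure ℝ) [∀ i, IsProbabilityMeasure (ν i)]
    (j : Fin d) :
    ((Measure.pi ν).prod (ν j)).map (fun p => Function.update p.1 j p.2) = Measure.pi ν := by
  symm
  refine Measure.pi_eq fun s hs => ?_
  rw [Measure.map_apply measurable_update' (MeasurableSet.univ_pi hs)]
  have hpre : (fun p : (Fin d → ℝ) × ℝ => Function.update p.1 j p.2) ⁻¹' (univ.pi s)
      = (univ.pi (Function.update s j univ)) ×ˢ (s j) := by
    ext p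
    simp only [mem_preimage, Set.mem_pi, mem_univ, true_implies, mem_prod]
    constructor
    · intro h
      refine ⟨fun i => ?_, by simpa using h j⟩
      rcases eq_or_ne i j with rfl | hij
      · simp
      · simpa [hij] using h i
    · rintro ⟨h1, h2⟩ i
      rcases eq_or_ne i j with rfl | hij
      · simpa using h2
      · simpa [hij] using h1 i
  rw [hpre, Measure.prod_prod, Measure.pi_pi,
    ← Finset.mul_prod_erase Finset.univ (fun i => ν i (s i)) (Finset.mem_univ j),
    ← Finset.mul_prod_erase Finset.univ (fun i => ν i (Function.update s j univ i))
      (Finset.mem_univ j)]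
  simp only [Function.update_self, measure_univ, one_mul]
  rw [mul_comm]
  congr 1
  refine Finset.prod_congr rfl fun i hi => ?_
  rw [Function.update_of_ne (Finset.ne_of_mem_erase hi)]

/-- Fubini's theorem in the form used to separate the first coordinate: integrating over all
coordinates is the same as integrating once more over an independent copy of coordinate `j`. -/
lemma integral_pi_update {d : ℕ} (ν : Fin d → Measure ℝ) [∀ i, IsProbabilityMeasure (ν i)]
    (j : Fin d) {G : (Fin d → ℝ) → ℝ} (hG : Integrable G (Measure.pi ν)) :
    ∫ Y, G Y ∂(Measure.pi ν) = ∫ y, ∫ Y, G (Function.update Y j y) ∂(Measure.pi ν) ∂(ν j) := by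
  have hm := map_update_pi ν j
  have hG' := hG
  rw [← hm] at hG'
  rw [integrable_map_measure hG'.aestronglyMeasurable measurable_update'.aemeasurable] at hG'
  have h2 : ∫ Y, G Y ∂(Measure.pi ν)
      = ∫ p, G (Function.update p.1 j p.2) ∂((Measure.pi ν).prod (ν j)) := by
    conv_lhs => rw [← hm]
    exact integral_map measurable_update'.aemeasurable (by rw [hm]; exact hG.aestronglyMeasurable)
  rw [h2]
  exact integral_prod_symm _ hG'

/-! ### Replacing the log-density increments by `K` on the coordinates other than the first -/

lemma mem_restIdx {d : ℕ} [NeZero d] (i : Fin d) : i ∈ restIdx d ↔ i ≠ 0 := by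
  simp [restIdx]

/-- Condition (1) in the definition of `𝒜_d`, in the form in which it also covers `d = 1`. -/
lemma sum_exp_le {ρ : ℝ → ℝ} (hpos : ∀ x, 0 < ρ x) {c : ℝ} {a : ℕ → ℝ} {d : ℕ} [NeZero d]
    {x : Fin d → ℝ} (hx : x ∈ Ad ρ c a d) :
    ∑ i ∈ restIdx d, Real.exp |x i| ≤ 2 * rhoE ρ (fun t => Real.exp |t|) * d := by
  have hR : 0 ≤ rhoE ρ (fun t => Real.exp |t|) :=
    integral_nonneg fun t => mul_nonneg (Real.exp_pos _).le (hpos t).le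
  have h1 := hx.1
  have hd : 1 ≤ d := Nat.one_le_iff_ne_zero.2 (NeZero.ne d)
  rcases eq_or_lt_of_le hd with h | h
  · have he : restIdx d = ∅ := by
      ext i
      have := i.2
      simp only [restIdx, Finset.mem_filter, Finset.mem_univ, true_and, Finset.notMem_empty,
        iff_false, not_not]
      omega
    rw [he, Finset.sum_empty]
    positivity
  · have hd1 : (0 : ℝ) < d - 1 := by
      have : (1 : ℝ) < d := by exact_mod_cast h
      linarith
    rw [one_div, inv_mul_lt_iff₀ hd1] at h1
    nlinarith

/-- The coefficient of `(y - x)³` in `log ρ(y) - log ρ(x) - K(x, y)`. -/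
def cubicCoef (ρ : ℝ → ℝ) (c x : ℝ) : ℝ :=
  iteratedDeriv 3 (fun t => Real.log (ρ t)) x / 6
    - (dl ρ x) ^ 3 * (Aset ρ c).indicator (fun _ => (1:ℝ)) x / 3

/-- Outside `A` the second term of the coefficient vanishes, and on `A` its modulus is at most
`c³ / 3`. -/
lemma cubicCoef_sq_le {ρ : ℝ → ℝ} {c M : ℝ} (hc : 0 < c) (hM : 0 ≤ M) {x : ℝ}
    (h3 : |iteratedDeriv 3 (fun t => Real.log (ρ t)) x| ≤ M * Real.exp (|x| / 2)) :
    cubicCoef ρ c x ^ 2 ≤ (M + c ^ 3) ^ 2 * Real.exp |x| := by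
  have hind : |(dl ρ x) ^ 3 * (Aset ρ c).indicator (fun _ => (1:ℝ)) x| ≤ c ^ 3 := by
    by_cases hx : x ∈ Aset ρ c
    · rw [indicator_of_mem hx, mul_one, abs_pow]
      exact pow_le_pow_left₀ (abs_nonneg _) hx.2.2.le 3
    · rw [indicator_of_notMem hx, mul_zero, abs_zero]
      positivity
  have h1 : 1 ≤ Real.exp (|x| / 2) := Real.one_le_exp (by positivity)
  have hle : |cubicCoef ρ c x| ≤ (M + c ^ 3) * Real.exp (|x| / 2) := by
    have hc3 : c ^ 3 ≤ c ^ 3 * Real.exp (|x| / 2) := le_mul_of_one_le_right (by positivity) h1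
    unfold cubicCoef
    refine (abs_sub _ _).trans ?_
    rw [abs_div, abs_div, abs_of_pos (by norm_num : (0:ℝ) < 6),
      abs_of_pos (by norm_num : (0:ℝ) < 3), add_mul]
    have : 0 ≤ M * Real.exp (|x| / 2) := by positivity
    have : 0 ≤ c ^ 3 := by positivity
    linarith
  calc cubicCoef ρ c x ^ 2 = |cubicCoef ρ c x| ^ 2 := (sq_abs _).symm
    _ ≤ ((M + c ^ 3) * Real.exp (|x| / 2)) ^ 2 := by gcongr
    _ = (M + c ^ 3) ^ 2 * Real.exp |x| := by
      rw [mul_pow, ← Real.exp_nat_mul]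
      congr 2
      push_cast
      ring

/-- On `𝒜_d` the error made by replacing `Σ (log ρ(Y_i) - log ρ(x_i))` by `Σ K(x_i, Y_i)` is
dominated by a random variable of expectation `O(1/d)`. -/
lemma rest_bound {ρ : ℝ → ℝ} (hpos : ∀ x, 0 < ρ x)
    (hlog : MemS 4 fun x => Real.log (ρ x)) {l : ℝ} (hl : 0 < l) {c : ℝ} (hc : 0 < c)
    (a : ℕ → ℝ) :
    ∃ C : ℝ, 0 ≤ C ∧ ∀ (d : ℕ) [NeZero d], ∀ x ∈ Ad ρ c a d, ∃ B : (Fin d → ℝ) → ℝ,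
      Integrable B (gaussPi l d x) ∧ ∫ Y, B Y ∂(gaussPi l d x) ≤ C / d ∧
      ∀ Y, |∑ i ∈ restIdx d, (Real.log (ρ (Y i)) - Real.log (ρ (x i))) - SK ρ c d x Y| ≤ B Y := by
  obtain ⟨M, hM, -, hT3, hT4⟩ := taylor_bounds hlog
  set R := rhoE ρ (fun t => Real.exp |t|) with hRdef
  have hR : 0 ≤ R := integral_nonneg fun t => mul_nonneg (Real.exp_pos _).le (hpos t).le
  have hw6 := wmom_nonneg l 6
  have hw4 := wmom_nonneg l 4
  refine ⟨((M + c ^ 3) ^ 2 * (2 * R) * (l ^ 6 * wmom l 6) + 1) / 2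
    + M * (2 * R) * (l ^ 4 * wmom l 4), by positivity, ?_⟩
  intro d _ x hx
  have hd : (0 : ℝ) < d := by exact_mod_cast Nat.pos_of_ne_zero (NeZero.ne d)
  have hd1 : (1 : ℝ) ≤ d := by exact_mod_cast Nat.one_le_iff_ne_zero.2 (NeZero.ne d)
  set σ := l / Real.sqrt d with hσdef
  have hσ : 0 ≤ σ := by positivity
  have hσl : σ ≤ l := div_le_self hl.le (Real.one_le_sqrt.2 hd1)
  have hσ2 : l ^ 2 / (d : ℝ) = σ ^ 2 := by rw [hσdef, div_pow, Real.sq_sqrt hd.le]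
  have hsum := sum_exp_le hpos hx
  rw [← hRdef] at hsum
  have hμ : gaussPi l d x = Measure.pi fun i => gaussianReal (x i) ((σ ^ 2).toNNReal) := by
    rw [gaussPi, hσ2]
  rw [hμ]
  set μ := Measure.pi fun i => gaussianReal (x i) ((σ ^ 2).toNNReal) with hμdef
  set b : Fin d → ℝ := fun i => if i ∈ restIdx d then cubicCoef ρ c (x i) else 0 with hb
  obtain ⟨hI, hV⟩ := second_moment_sum hσ hσl x b
  have hI4 : ∀ i, Integrable (fun Y : Fin d → ℝ =>
      M * Real.exp |x i| * (Real.exp |Y i - x i| * |Y i - x i| ^ 4)) μ := fun i =>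
    (integrable_comp_eval (μ := fun i => gaussianReal (x i) ((σ ^ 2).toNNReal))
      (integrable_gauss hσ hσl (x i) 4)).const_mul _
  have hIs := integrable_finsetSum (restIdx d) fun i _ => hI4 i
  have hIq : Integrable (fun Y : Fin d → ℝ =>
      d * (∑ i, b i * (Y i - x i) ^ 3) ^ 2 + 1 / (d : ℝ)) μ :=
    (hI.const_mul _).add (integrable_const _)
  refine ⟨fun Y => (d * (∑ i, b i * (Y i - x i) ^ 3) ^ 2 + 1 / d) / 2
    + ∑ i ∈ restIdx d, M * Real.exp |x i| * (Real.exp |Y i - x i| * |Y i - x i| ^ 4), ?_, ?_, ?_⟩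
  · exact (hIq.div_const 2).add hIs
  · rw [integral_add (hIq.div_const 2) hIs,
      integral_div, integral_add (hI.const_mul _) (integrable_const _), integral_const_mul,
      integral_finsetSum _ fun i _ => hI4 i, integral_const]
    have hb2 : ∑ i, b i ^ 2 ≤ (M + c ^ 3) ^ 2 * (2 * R * d) := by
      have : ∑ i, b i ^ 2 = ∑ i ∈ restIdx d, cubicCoef ρ c (x i) ^ 2 := by
        simp [hb, ite_pow, Finset.sum_ite_mem]
      rw [this]
      calc _ ≤ ∑ i ∈ restIdx d, (M + c ^ 3) ^ 2 * Real.exp |x i| :=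
            Finset.sum_le_sum fun i _ => cubicCoef_sq_le hc hM (hT3 (x i))
        _ ≤ _ := by rw [← Finset.mul_sum]; gcongr
    have hV' := hV.trans (mul_le_mul_of_nonneg_right hb2 (by positivity))
    have h4 : ∑ i ∈ restIdx d, ∫ Y : Fin d → ℝ,
        M * Real.exp |x i| * (Real.exp |Y i - x i| * |Y i - x i| ^ 4) ∂μ
        ≤ M * (2 * R * d) * (σ ^ 4 * wmom l 4) := by
      calc _ ≤ ∑ i ∈ restIdx d, M * Real.exp |x i| * (σ ^ 4 * wmom l 4) := by
            refine Finset.sum_le_sum fun i _ => ?_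
            rw [integral_const_mul]
            gcongr
            rw [hμdef, integral_comp_eval (μ := fun i => gaussianReal (x i) ((σ ^ 2).toNNReal))
              (f := fun y : ℝ => Real.exp |y - x i| * |y - x i| ^ 4) (by fun_prop)]
            exact moment_gauss hσ hσl (x i) 4
        _ = M * (∑ i ∈ restIdx d, Real.exp |x i|) * (σ ^ 4 * wmom l 4) := by
            rw [Finset.mul_sum, Finset.sum_mul]
        _ ≤ _ := by gcongr
    have e2 : σ ^ 2 = l ^ 2 / d := hσ2.symm
    have e6 : σ ^ 6 = l ^ 6 / d ^ 3 := by
      rw [show σ ^ 6 = (σ ^ 2) ^ 3 by ring, e2]; ring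
    have e4 : σ ^ 4 = l ^ 4 / d ^ 2 := by
      rw [show σ ^ 4 = (σ ^ 2) ^ 2 by ring, e2]; ring
    rw [e6] at hV'
    rw [e4] at h4
    have hV'' := mul_le_mul_of_nonneg_left hV' hd.le
    have hfin : (d * ((M + c ^ 3) ^ 2 * (2 * R * d) * (l ^ 6 / d ^ 3 * wmom l 6)) + 1 / d) / 2
        + M * (2 * R * d) * (l ^ 4 / d ^ 2 * wmom l 4)
        = (((M + c ^ 3) ^ 2 * (2 * R) * (l ^ 6 * wmom l 6) + 1) / 2
          + M * (2 * R) * (l ^ 4 * wmom l 4)) / d := by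
      field_simp
    rw [← hfin]
    simp only [probReal_univ, one_smul]
    gcongr
  · intro Y
    have hsplit : ∑ i ∈ restIdx d, (Real.log (ρ (Y i)) - Real.log (ρ (x i))) - SK ρ c d x Y
        = ∑ i, b i * (Y i - x i) ^ 3 + ∑ i ∈ restIdx d,
          (Real.log (ρ (Y i)) - Real.log (ρ (x i)) - dl ρ (x i) * (Y i - x i)
            - d2l ρ (x i) / 2 * (Y i - x i) ^ 2
            - iteratedDeriv 3 (fun t => Real.log (ρ t)) (x i) / 6 * (Y i - x i) ^ 3) := by
      have : ∑ i, b i * (Y i - x i) ^ 3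
          = ∑ i ∈ restIdx d, cubicCoef ρ c (x i) * (Y i - x i) ^ 3 := by
        simp [hb, ite_mul, Finset.sum_ite_mem]
      rw [this, SK, ← Finset.sum_sub_distrib, ← Finset.sum_add_distrib]
      refine Finset.sum_congr rfl fun i _ => ?_
      unfold Kf cubicCoef
      ring
    rw [hsplit]
    refine (abs_add_le _ _).trans (add_le_add ?_ ?_)
    · -- `2|w| ≤ d w² + 1/d`, which spares the Cauchy–Schwarz inequality
      set w := |∑ i, b i * (Y i - x i) ^ 3| with hw
      rw [← sq_abs (∑ i, b i * (Y i - x i) ^ 3), ← hw]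
      have : 0 ≤ (d * w - 1) ^ 2 / d := by positivity
      have e : (d * w - 1) ^ 2 / d = d * w ^ 2 + 1 / d - 2 * w := by
        field_simp
        ring
      linarith
    · refine (Finset.abs_sum_le_sum_abs _ _).trans (Finset.sum_le_sum fun i _ => ?_)
      refine (hT4 (x i) (Y i)).trans ?_
      rw [← mul_assoc, mul_assoc M (Real.exp |x i|), ← Real.exp_add]
      have h0 := abs_nonneg (x i)
      have h1 := abs_nonneg (Y i - x i)
      gcongr
      linarith

/-! ### Comparison of the two generators -/

/-- The acceptance probability averaged over all coordinates but the first, whose proposed value is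
`y`; it plays for `G_d` the role that `β` plays for `G̃_d`. -/
def accF (ρ : ℝ → ℝ) (l : ℝ) (d : ℕ) [NeZero d] (x : Fin d → ℝ) (y : ℝ) : ℝ :=
  ∫ Y, min 1 (Real.exp (Real.log (ρ y) - Real.log (ρ (x 0))
    + ∑ i ∈ restIdx d, (Real.log (ρ (Y i)) - Real.log (ρ (x i))))) ∂(gaussPi l d x)

lemma abs_min_exp_le_one (a : ℝ) : |min 1 (Real.exp a)| ≤ 1 := by
  rw [abs_of_nonneg (le_min zero_le_one (Real.exp_pos a).le)]
  exact min_le_left _ _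

lemma ratio_update {ρ : ℝ → ℝ} (hpos : ∀ x, 0 < ρ x) {d : ℕ} [NeZero d] (x Y : Fin d → ℝ)
    (y : ℝ) :
    (∏ i, ρ (Function.update Y 0 y i)) / ∏ i, ρ (x i)
      = Real.exp (Real.log (ρ y) - Real.log (ρ (x 0))
        + ∑ i ∈ restIdx d, (Real.log (ρ (Y i)) - Real.log (ρ (x i)))) := by
  have hrest : restIdx d = Finset.univ.erase 0 := by
    ext i
    simp [mem_restIdx]
  rw [hrest, Real.exp_add, Real.exp_sum, ← Finset.prod_div_distrib,
    ← Finset.mul_prod_erase Finset.univ _ (Finset.mem_univ (0 : Fin d))]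
  congr 1
  · rw [Function.update_self, Real.exp_sub, Real.exp_log (hpos _), Real.exp_log (hpos _)]
  · refine Finset.prod_congr rfl fun i hi => ?_
    rw [Function.update_of_ne (Finset.ne_of_mem_erase hi), Real.exp_sub, Real.exp_log (hpos _),
      Real.exp_log (hpos _)]

instance {l : ℝ} {d : ℕ} (x : Fin d → ℝ) : IsProbabilityMeasure (gaussPi l d x) := by
  unfold gaussPi
  infer_instance

/-- Conditioning on the first coordinate of the proposal. -/
lemma Gd_eq {ρ : ℝ → ℝ} (hmeas : Measurable ρ) (hpos : ∀ x, 0 < ρ x) {l : ℝ} {d : ℕ} [NeZero d]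
    {f : ℝ → ℝ} {x : Fin d → ℝ}
    (hf : Integrable (fun y => f y - f (x 0)) (gaussianReal (x 0) ((l ^ 2 / (d:ℝ)).toNNReal))) :
    Gd ρ l d f x = d * ∫ y, (f y - f (x 0)) * accF ρ l d x y
      ∂(gaussianReal (x 0) ((l ^ 2 / (d:ℝ)).toNNReal)) := by
  have hm : Measurable fun Y : Fin d → ℝ => min 1 ((∏ i, ρ (Y i)) / ∏ i, ρ (x i)) :=
    measurable_const.min ((Finset.measurable_prod _ fun i _ =>
      hmeas.comp (measurable_pi_apply i)).div_const _)
  have hI0 : Integrable (fun Y : Fin d → ℝ => f (Y 0) - f (x 0)) (gaussPi l d x) :=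
    integrable_comp_eval (μ := fun i => gaussianReal (x i) ((l ^ 2 / (d:ℝ)).toNNReal)) hf
  have hI : Integrable (fun Y : Fin d → ℝ =>
      (f (Y 0) - f (x 0)) * min 1 ((∏ i, ρ (Y i)) / ∏ i, ρ (x i))) (gaussPi l d x) := by
    refine hI0.mul_bdd (c := 1) hm.aestronglyMeasurable (ae_of_all _ fun Y => ?_)
    have := ratio_update hpos x Y (Y 0)
    rw [Function.update_eq_self] at this
    rw [this]
    exact abs_min_exp_le_one _
  have := integral_pi_update (fun i => gaussianReal (x i) ((l ^ 2 / (d:ℝ)).toNNReal)) 0 hI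
  unfold Gd
  rw [gaussPi, this]
  congr 2 with y
  rw [accF, ← integral_const_mul]
  refine integral_congr_ae (ae_of_all _ fun Y => ?_)
  simp only [Function.update_self]
  rw [ratio_update hpos]

/-- The averaged acceptance probabilities differ by the first-order Taylor error of `log ρ` in the
first coordinate plus `O(1/d)`. -/
lemma acc_sub_beta {ρ : ℝ → ℝ} (hmeas : Measurable ρ) {c l : ℝ} {d : ℕ} [NeZero d]
    {x : Fin d → ℝ} {B : (Fin d → ℝ) → ℝ} (hB : Integrable B (gaussPi l d x))
    (hle : ∀ Y, |∑ i ∈ restIdx d, (Real.log (ρ (Y i)) - Real.log (ρ (x i))) - SK ρ c d x Y| ≤ B Y)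
    (y : ℝ) :
    |accF ρ l d x y - betaF ρ c l d x y|
      ≤ |Real.log (ρ y) - Real.log (ρ (x 0)) - dl ρ (x 0) * (y - x 0)|
        + ∫ Y, B Y ∂(gaussPi l d x) := by
  have hbd : ∀ g : (Fin d → ℝ) → ℝ, Measurable g →
      Integrable (fun Y => min 1 (Real.exp (g Y))) (gaussPi l d x) := fun g hg =>
    Integrable.of_bound (by fun_prop) 1 (ae_of_all _ fun Y => abs_min_exp_le_one _)
  have hSK : Measurable (SK ρ c d x) := by
    unfold SK Kf
    fun_prop
  unfold accF betaF
  rw [← integral_sub (hbd _ (by fun_prop)) (hbd _ (by fun_prop))]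
  have hi : Integrable (fun Y => |Real.log (ρ y) - Real.log (ρ (x 0)) - dl ρ (x 0) * (y - x 0)|
      + B Y) (gaussPi l d x) := (integrable_const _).add hB
  rw [← Real.norm_eq_abs]
  refine (norm_integral_le_of_norm_le hi (ae_of_all _ fun Y => ?_)).trans_eq ?_
  · refine (abs_min_exp_sub_le _ _).trans ?_
    refine le_trans (le_of_eq_of_le ?_ (abs_add_le _ _)) (add_le_add_right (hle Y) _)
    congr 1
    ring
  · rw [integral_add (integrable_const _) hB, integral_const]
    simp

/-- **Proposition.** There is a constant `C` with
`|G_d f(x) - G̃_d f(x)| ≤ C ‖f'‖_{∞,1/2} e^{|x₁|} d^{-1/2}` for every `f ∈ S³`, all `d ∈ ℕ`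
and every `x ∈ 𝒜_d`. -/
theorem stmt5 (ρ : ℝ → ℝ) (hmeas : Measurable ρ) (hpos : ∀ x, 0 < ρ x)
    (hint : ∫ x, ρ x = 1) (hlog : MemS 4 fun x => Real.log (ρ x))
    (htail : SuperExpTails ρ) (l : ℝ) (hl : 0 < l)
    (c : ℝ) (hc : 0 < c) (hA : 0 < ∫ x in Aset ρ c, ρ x)
    (a : ℕ → ℝ) (ha : Sluggish a) :
    ∃ C : ℝ, ∀ (d : ℕ) [NeZero d], ∀ f : ℝ → ℝ, MemS 3 f → ∀ x ∈ Ad ρ c a d,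
      |Gd ρ l d f x - tGd ρ c l d f x| ≤
        C * normIS (deriv f) (1/2) * Real.exp |x 0| / Real.sqrt d := by
  obtain ⟨M, hM, hT1, -, -⟩ := taylor_bounds hlog
  obtain ⟨K, hK, hrest⟩ := rest_bound hpos hlog hl hc a
  have hw1 := wmom_nonneg l 1
  have hw3 := wmom_nonneg l 3
  refine ⟨M * l ^ 3 * wmom l 3 + K * l * wmom l 1, ?_⟩
  intro d _ f hf x hx
  obtain ⟨B, hBi, hBe, hB⟩ := hrest d x hx
  have hd : (0 : ℝ) < d := by exact_mod_cast Nat.pos_of_ne_zero (NeZero.ne d)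
  have hd1 : (1 : ℝ) ≤ d := by exact_mod_cast Nat.one_le_iff_ne_zero.2 (NeZero.ne d)
  set σ := l / Real.sqrt d with hσdef
  have hσ : 0 ≤ σ := by positivity
  have hσl : σ ≤ l := div_le_self hl.le (Real.one_le_sqrt.2 hd1)
  have hσ2 : l ^ 2 / (d : ℝ) = σ ^ 2 := by rw [hσdef, div_pow, Real.sq_sqrt hd.le]
  set N := normIS (deriv f) (1 / 2) with hNdef
  have hN : 0 ≤ N := normIS_nonneg _ _
  have hfc : Continuous f := hf.1.continuous
  have hm1 := integrable_gauss hσ hσl (x 0) 1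
  have hm3 := integrable_gauss hσ hσl (x 0) 3
  have hM1 := moment_gauss hσ hσl (x 0) 1
  have hM3 := moment_gauss hσ hσl (x 0) 3
  set γ := gaussianReal (x 0) ((σ ^ 2).toNNReal) with hγ
  have hinc : ∀ y, |f y - f (x 0)| ≤ N * Real.exp ((|x 0| + |y - x 0|) / 2) * |y - x 0| :=
    increment_bound hf (x 0)
  have hfi : Integrable (fun y => f y - f (x 0)) γ := by
    refine (hm1.const_mul (N * Real.exp |x 0|)).mono' (by fun_prop) (ae_of_all _ fun y => ?_)
    refine (hinc y).trans ?_
    rw [← mul_assoc, mul_assoc N (Real.exp |x 0|), ← Real.exp_add, pow_one]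
    have h0 := abs_nonneg (x 0)
    have h1 := abs_nonneg (y - x 0)
    gcongr
    linarith
  rw [Gd_eq hmeas hpos (by rw [hσ2]; exact hfi), tGd, hσ2, ← hγ, ← mul_sub, abs_mul,
    abs_of_pos hd]
  have hle1 : ∀ g : (Fin d → ℝ) → ℝ,
      |∫ Y, min 1 (Real.exp (g Y)) ∂(gaussPi l d x)| ≤ 1 := fun g => by
    have := norm_integral_le_of_norm_le_const (μ := gaussPi l d x) (C := 1)
      (f := fun Y => min 1 (Real.exp (g Y)))
      (ae_of_all _ fun Y => abs_min_exp_le_one (g Y))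
    simpa using this
  have hSK : Measurable (SK ρ c d x) := by
    unfold SK Kf
    fun_prop
  have hacc : Measurable (accF ρ l d x) := by
    unfold accF
    refine (StronglyMeasurable.integral_prod_right ?_).measurable
    exact Measurable.stronglyMeasurable (by unfold Function.uncurry; fun_prop)
  have hbeta : Measurable (betaF ρ c l d x) := by
    unfold betaF
    refine (StronglyMeasurable.integral_prod_right ?_).measurable
    exact Measurable.stronglyMeasurable (by unfold Function.uncurry; fun_prop)
  rw [← integral_sub
    (hfi.mul_bdd (c := 1) hacc.aestronglyMeasurable (ae_of_all _ fun y => hle1 _))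
    (hfi.mul_bdd (c := 1) hbeta.aestronglyMeasurable (ae_of_all _ fun y => hle1 _))]
  have hbound : |∫ y, ((f y - f (x 0)) * accF ρ l d x y - (f y - f (x 0)) * betaF ρ c l d x y) ∂γ|
      ≤ ∫ y, (N * Real.exp |x 0| * M * (Real.exp |y - x 0| * |y - x 0| ^ 3)
        + N * Real.exp |x 0| * (K / d) * (Real.exp |y - x 0| * |y - x 0| ^ 1)) ∂γ := by
    rw [← Real.norm_eq_abs]
    refine norm_integral_le_of_norm_le ((hm3.const_mul _).add (hm1.const_mul _))
      (ae_of_all _ fun y => ?_)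
    rw [← mul_sub, Real.norm_eq_abs, abs_mul]
    have h2 := (acc_sub_beta hmeas hBi hB y).trans (add_le_add (hT1 (x 0) y) hBe)
    have h0 := abs_nonneg (x 0)
    have h1 := abs_nonneg (y - x 0)
    have hE : Real.exp ((|x 0| + |y - x 0|) / 2) * Real.exp ((|x 0| + |y - x 0|) / 2)
        = Real.exp |x 0| * Real.exp |y - x 0| := by
      rw [← Real.exp_add, ← Real.exp_add]
      congr 1
      ring
    have hE1 : Real.exp ((|x 0| + |y - x 0|) / 2) ≤ Real.exp |x 0| * Real.exp |y - x 0| := by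
      rw [← Real.exp_add]
      exact Real.exp_le_exp.2 (by linarith)
    calc _ ≤ N * Real.exp ((|x 0| + |y - x 0|) / 2) * |y - x 0|
          * (M * Real.exp ((|x 0| + |y - x 0|) / 2) * |y - x 0| ^ 2 + K / d) :=
          mul_le_mul (hinc y) h2 (abs_nonneg _) (by positivity)
      _ = N * (Real.exp ((|x 0| + |y - x 0|) / 2) * Real.exp ((|x 0| + |y - x 0|) / 2))
            * M * |y - x 0| ^ 3
          + N * Real.exp ((|x 0| + |y - x 0|) / 2) * (K / d) * |y - x 0| := by ring
      _ ≤ N * (Real.exp |x 0| * Real.exp |y - x 0|) * M * |y - x 0| ^ 3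
          + N * (Real.exp |x 0| * Real.exp |y - x 0|) * (K / d) * |y - x 0| := by
          rw [hE]
          gcongr
      _ = _ := by ring
  rw [integral_add (hm3.const_mul _) (hm1.const_mul _), integral_const_mul,
    integral_const_mul] at hbound
  have hs : (0 : ℝ) < Real.sqrt d := Real.sqrt_pos.2 hd
  -- `d σ³ = l³ / √d`, and the other term is `σ = l / √d`
  calc _ ≤ d * (N * Real.exp |x 0| * M * (σ ^ 3 * wmom l 3)
        + N * Real.exp |x 0| * (K / d) * (σ ^ 1 * wmom l 1)) := by
        refine mul_le_mul_of_nonneg_left (hbound.trans ?_) hd.le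
        gcongr
    _ = (d * σ ^ 2) * (N * Real.exp |x 0| * M * (σ * wmom l 3))
        + N * Real.exp |x 0| * K * (σ * wmom l 1) := by
        field_simp
    _ = _ := by
        rw [← hσ2, hσdef]
        field_simp
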